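/- Superadditivity of quantum relative entropy with tensorized reference: for any density operator ρ^N on ℍ^{⊗N}, any density operator σ on ℍ, and any partition of {1,…,N} into n disjoint blocks B₁,…,B_n each of size k (so N = nk), one has D(ρ^N ‖ σ^{⊗N}) ≥ Σ_{j=1}^{n} D(ρ^{N:(k),B_j} ‖ σ^{⊗k}), where ρ^{N:(k),B_j} is the marginal of ρ^N on the block B_j. -/

import Mathlib

open Matrix
open scoped ComplexOrder

/-- Matrix logarithm via the continuous functional calculus. -/
noncomputable def mlog {m : Type*} [Fintype m] [DecidableEq m] (M : Matrix m m ℂ) :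
    Matrix m m ℂ := cfc Real.log M

/-- Umegaki relative entropy with values in `EReal`:
`D(ρ‖σ) = tr(ρ(log ρ − log σ))` when `supp ρ ⊆ supp σ`, and `+∞` otherwise. -/
noncomputable def relEntE {m : Type*} [Fintype m] [DecidableEq m]
    (ρ σ : Matrix m m ℂ) : EReal :=
  open scoped Classical in
  if ∀ v : m → ℂ, σ.mulVec v = 0 → ρ.mulVec v = 0 then
    (((ρ * (mlog ρ - mlog σ)).trace).re : EReal)
  else ⊤

/-- The tensor power `ϱ^{⊗ι}` over an index type `ι`. -/
noncomputable def tensorPowOn {n : ℕ} (ι : Type*) [Fintype ι]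
    (ϱ : Matrix (Fin n) (Fin n) ℂ) : Matrix (ι → Fin n) (ι → Fin n) ℂ :=
  Matrix.of fun x y => ∏ l : ι, ϱ (x l) (y l)

/-- Extension of a configuration on the block `{j} × Fin k` by a configuration `g`
on the complement. -/
def blockExt {n nb k : ℕ} (j : Fin nb) (x : Fin k → Fin n)
    (g : {p : Fin nb × Fin k // p.1 ≠ j} → Fin n) : Fin nb × Fin k → Fin n :=
  fun p => if h : p.1 = j then x p.2 else g ⟨p, h⟩

/-- The marginal of an `N = nb·k` particle state on the `j`-th block of size `k`
(partial trace over all the other blocks). -/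
noncomputable def blockMarginal {n nb k : ℕ}
    (ρ : Matrix (Fin nb × Fin k → Fin n) (Fin nb × Fin k → Fin n) ℂ) (j : Fin nb) :
    Matrix (Fin k → Fin n) (Fin k → Fin n) ℂ :=
  Matrix.of fun x y =>
    ∑ g : {p : Fin nb × Fin k // p.1 ≠ j} → Fin n, ρ (blockExt j x g) (blockExt j y g)

/-!
When `supp ρ ⊆ supp ⨂ⱼ τⱼ`, expanding `tr ρ log ⨂ⱼ τⱼ` in a product eigenbasis of the reference
gives the chain rule `D(ρ ‖ ⨂ⱼ τⱼ) = D(ρ ‖ ⨂ⱼ ρⱼ) + ∑ⱼ D(ρⱼ ‖ τⱼ)`, where `ρⱼ` are the marginals of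
`ρ`. The first term on the right is nonnegative by Klein's inequality `D(ρ ‖ σ) ≥ tr ρ - tr σ`,
which follows by measuring `ρ` in an eigenbasis of `σ`: the outcome probabilities are a doubly
stochastic average of the eigenvalues of `ρ`, so by Jensen's inequality the measurement lowers
`tr ρ log ρ` while leaving `tr ρ log σ` unchanged, and Gibbs' inequality applies to the outcomes.
-/

section SpectralDecomposition

variable {m l : Type*} [Fintype m] [DecidableEq m] [Fintype l] [DecidableEq l]

/-- `M = U diag(d) Uᴴ` with `U` unitary and `d` real. The eigenbasis need not be the one chosen by
`Matrix.IsHermitian.eigenvectorUnitary`, so that product eigenbases of tensor products qualify. -/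
structure IsSpectralDecomp (M U : Matrix m m ℂ) (d : m → ℝ) : Prop where
  mem_unitaryGroup : U ∈ unitaryGroup m ℂ
  eq_conj : M = U * diagonal (fun i => (d i : ℂ)) * Uᴴ

theorem exists_isSpectralDecomp {M : Matrix m m ℂ} (hM : M.IsHermitian) :
    ∃ U d, IsSpectralDecomp M U d :=
  ⟨hM.eigenvectorUnitary, hM.eigenvalues, hM.eigenvectorUnitary.2, by
    simpa only [Unitary.conjStarAlgAut_apply] using! hM.spectral_theorem⟩

theorem conjTranspose_mul_self_of_mem_unitaryGroup {R : Type*} [CommRing R] [StarRing R]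
    {U : Matrix m m R} (hU : U ∈ unitaryGroup m R) : Uᴴ * U = 1 :=
  mem_unitaryGroup_iff'.mp hU

theorem mul_conjTranspose_self_of_mem_unitaryGroup {R : Type*} [CommRing R] [StarRing R]
    {U : Matrix m m R} (hU : U ∈ unitaryGroup m R) : U * Uᴴ = 1 :=
  mem_unitaryGroup_iff.mp hU

theorem isSpectralDecomp_one {U : Matrix m m ℂ} (hU : U ∈ unitaryGroup m ℂ) :
    IsSpectralDecomp 1 U 1 :=
  ⟨hU, by simp [mul_conjTranspose_self_of_mem_unitaryGroup hU]⟩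

namespace IsSpectralDecomp

variable {M U : Matrix m m ℂ} {d : m → ℝ}

theorem isHermitian (h : IsSpectralDecomp M U d) : M.IsHermitian := by
  rw [h.eq_conj]
  exact isHermitian_mul_mul_conjTranspose U
    (isHermitian_diagonal_of_self_adjoint _ (by ext; simp))

theorem posSemidef (h : IsSpectralDecomp M U d) (hd : ∀ i, 0 ≤ d i) : M.PosSemidef := by
  rw [h.eq_conj]
  exact (PosSemidef.diagonal fun i => Complex.zero_le_real.mpr (hd i)).mul_mul_conjTranspose_same U

theorem mul_eq (h : IsSpectralDecomp M U d) : M * U = U * diagonal (fun i => (d i : ℂ)) := by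
  rw [h.eq_conj, Matrix.mul_assoc, conjTranspose_mul_self_of_mem_unitaryGroup h.mem_unitaryGroup,
    Matrix.mul_one]

theorem conjTranspose_mul_eq (h : IsSpectralDecomp M U d) :
    Uᴴ * M = diagonal (fun i => (d i : ℂ)) * Uᴴ := by
  rw [h.eq_conj, ← Matrix.mul_assoc, ← Matrix.mul_assoc,
    conjTranspose_mul_self_of_mem_unitaryGroup h.mem_unitaryGroup, Matrix.one_mul]

theorem submatrix (h : IsSpectralDecomp M U d) (e : l ≃ m) :
    IsSpectralDecomp (M.submatrix e e) (U.submatrix e e) (d ∘ e) where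
  mem_unitaryGroup := by
    rw [mem_unitaryGroup_iff', star_eq_conjTranspose, conjTranspose_submatrix,
      submatrix_mul_equiv, conjTranspose_mul_self_of_mem_unitaryGroup h.mem_unitaryGroup,
      submatrix_one_equiv]
  eq_conj := by
    rw [h.eq_conj, conjTranspose_submatrix, ← submatrix_mul_equiv _ _ _ e,
      ← submatrix_mul_equiv _ _ _ e, submatrix_diagonal_equiv]
    rfl

theorem aeval (h : IsSpectralDecomp M U d) (P : Polynomial ℝ) :
    IsSpectralDecomp (Polynomial.aeval M P) U (fun i => P.eval (d i)) where
  mem_unitaryGroup := h.mem_unitaryGroup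
  eq_conj := by
    let φ : (m → ℝ) →ₐ[ℝ] Matrix m m ℂ :=
      ((Unitary.conjStarAlgAut ℝ (Matrix m m ℂ) ⟨U, h.mem_unitaryGroup⟩ : _ →ₐ[ℝ] _).comp
        (diagonalAlgHom ℝ)).comp (Complex.ofRealAm.compLeft m)
    have hφ (f : m → ℝ) : φ f = U * diagonal (fun i => (f i : ℂ)) * Uᴴ := rfl
    rw [h.eq_conj, ← hφ, ← hφ, Polynomial.aeval_algHom_apply, Polynomial.aeval_pi_apply]
    simp only [Polynomial.coe_aeval_eq_eval]

theorem cfc (h : IsSpectralDecomp M U d) (f : ℝ → ℝ) :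
    IsSpectralDecomp (cfc f M) U (fun i => f (d i)) := by
  -- `f` agrees with a polynomial on the finite set of all relevant points.
  let s : Finset ℝ := (finite_real_spectrum (A := M)).toFinset ∪ Finset.univ.image d
  let P : Polynomial ℝ := Lagrange.interpolate s id f
  have hP : ∀ t ∈ s, P.eval t = f t := fun t ht =>
    Lagrange.eval_interpolate_at_node (v := id) f (Set.injOn_id _) ht
  have hcfc : _root_.cfc f M = Polynomial.aeval M P := by
    rw [← cfc_polynomial P M h.isHermitian]
    exact cfc_congr fun t ht => (hP t (by simp [s, ht])).symm
  have hd : (fun i => f (d i)) = fun i => P.eval (d i) :=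
    funext fun i => (hP (d i) (by simp [s])).symm
  rw [hcfc, hd]
  exact h.aeval P

theorem mlog (h : IsSpectralDecomp M U d) :
    IsSpectralDecomp (mlog M) U (fun i => Real.log (d i)) :=
  h.cfc Real.log

end IsSpectralDecomp

theorem mlog_submatrix_equiv {M : Matrix m m ℂ} (hM : M.IsHermitian) (e : l ≃ m) :
    mlog (M.submatrix e e) = (mlog M).submatrix e e := by
  obtain ⟨U, d, h⟩ := exists_isSpectralDecomp hM
  rw [(h.submatrix e).mlog.eq_conj, (h.mlog.submatrix e).eq_conj]
  rfl

end SpectralDecomposition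

section BornProb

variable {m : Type*} [Fintype m]

/-- The Born probability `⟨uₓ, ρ uₓ⟩` of outcome `x` when the state `ρ` is measured in the basis
formed by the columns `uₓ` of `U`. -/
noncomputable def bornProb (U ρ : Matrix m m ℂ) (x : m) : ℝ :=
  (star (U.col x) ⬝ᵥ ρ *ᵥ U.col x).re

variable {U ρ σ E : Matrix m m ℂ} {d : m → ℝ} {x : m}

theorem bornProb_eq_re_diag (U ρ : Matrix m m ℂ) (x : m) :
    bornProb U ρ x = ((Uᴴ * ρ * U) x x).re := by
  rw [bornProb, Matrix.mul_assoc]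
  rfl

theorem bornProb_nonneg (hρ : ρ.PosSemidef) (U : Matrix m m ℂ) (x : m) : 0 ≤ bornProb U ρ x :=
  hρ.re_dotProduct_nonneg _

theorem mulVec_col_eq_zero_of_bornProb_eq_zero (hρ : ρ.PosSemidef) (h : bornProb U ρ x = 0) :
    ρ *ᵥ U.col x = 0 := by
  rw [← hρ.dotProduct_mulVec_zero_iff]
  have him := Complex.nonneg_iff.mp (hρ.dotProduct_mulVec_nonneg (U.col x))
  exact Complex.ext h him.2.symm

variable [DecidableEq m]

namespace IsSpectralDecomp

theorem re_trace_mul (h : IsSpectralDecomp σ U d) (ρ : Matrix m m ℂ) :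
    (ρ * σ).trace.re = ∑ x, bornProb U ρ x * d x := by
  rw [h.eq_conj, ← Matrix.mul_assoc, trace_mul_comm, ← Matrix.mul_assoc, ← Matrix.mul_assoc]
  simp [trace, bornProb_eq_re_diag, mul_diagonal]

theorem bornProb_eq (h : IsSpectralDecomp ρ U d) : bornProb U ρ = d := by
  ext x
  rw [bornProb_eq_re_diag, Matrix.mul_assoc, h.mul_eq, ← Matrix.mul_assoc,
    conjTranspose_mul_self_of_mem_unitaryGroup h.mem_unitaryGroup, Matrix.one_mul]
  simp

theorem nonneg (h : IsSpectralDecomp ρ U d) (hρ : ρ.PosSemidef) (i : m) : 0 ≤ d i := by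
  rw [← h.bornProb_eq]
  exact bornProb_nonneg hρ U i

theorem re_trace_mul_mlog_self (h : IsSpectralDecomp ρ U d) :
    (ρ * _root_.mlog ρ).trace.re = ∑ i, d i * Real.log (d i) := by
  rw [h.mlog.re_trace_mul, h.bornProb_eq]

theorem bornProb_eq_mulVec (h : IsSpectralDecomp ρ E d) (U : Matrix m m ℂ) :
    bornProb U ρ = (Uᴴ * E).map Complex.normSq *ᵥ d := by
  ext x
  have hconj : Uᴴ * ρ * U = (Uᴴ * E) * diagonal (fun i => (d i : ℂ)) * (Uᴴ * E)ᴴ := by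
    rw [h.eq_conj, conjTranspose_mul, conjTranspose_conjTranspose]
    simp only [Matrix.mul_assoc]
  rw [bornProb_eq_re_diag, hconj, Matrix.mul_apply, Complex.re_sum]
  refine Finset.sum_congr rfl fun i _ => ?_
  rw [mul_diagonal, conjTranspose_apply, RCLike.star_def, mul_right_comm, Complex.mul_conj,
    ← Complex.ofReal_mul, Complex.ofReal_re]
  rfl

end IsSpectralDecomp

theorem sum_bornProb (hU : U ∈ unitaryGroup m ℂ) (ρ : Matrix m m ℂ) :
    ∑ x, bornProb U ρ x = ρ.trace.re := by
  simpa using ((isSpectralDecomp_one hU).re_trace_mul ρ).symm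

end BornProb

section Support

variable {m l : Type*} [Fintype m] [Fintype l] {U ρ σ : Matrix m m ℂ} {d : m → ℝ} {x : m}

/-- The condition `supp ρ ⊆ supp σ` for Hermitian matrices, expressed through kernels as in
`relEntE`. -/
def SupportLE (ρ σ : Matrix m m ℂ) : Prop :=
  ∀ v : m → ℂ, σ *ᵥ v = 0 → ρ *ᵥ v = 0

theorem supportLE_submatrix_equiv (e : l ≃ m) :
    SupportLE (ρ.submatrix e e) (σ.submatrix e e) ↔ SupportLE ρ σ := by
  have hcomp (v : m → ℂ) : v ∘ e = 0 ↔ v = 0 :=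
    ⟨fun h => e.surjective.injective_comp_right h, by rintro rfl; rfl⟩
  refine (e.arrowCongr (Equiv.refl ℂ)).forall_congr fun {v} => ?_
  simp only [submatrix_mulVec_equiv, hcomp]
  rfl

theorem trace_submatrix_equiv {R : Type*} [AddCommMonoid R] (M : Matrix m m R) (e : l ≃ m) :
    (M.submatrix e e).trace = M.trace :=
  e.sum_comp M.diag

variable [DecidableEq m] [DecidableEq l]

theorem SupportLE.bornProb_eq_zero (h : SupportLE ρ σ) (hσ : IsSpectralDecomp σ U d)
    (hx : d x = 0) : bornProb U ρ x = 0 := by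
  have hσx : σ *ᵥ U.col x = 0 := by
    rw [← mulVec_single_one, mulVec_mulVec, hσ.mul_eq, ← mulVec_mulVec, diagonal_mulVec_single, hx]
    simp
  simp [bornProb, h _ hσx]

theorem supportLE_of_bornProb_eq_zero (hρ : ρ.PosSemidef) (hσ : IsSpectralDecomp σ U d)
    (h : ∀ x, d x = 0 → bornProb U ρ x = 0) : SupportLE ρ σ := by
  intro v hv
  have hcoord (x : m) : (d x : ℂ) * (Uᴴ *ᵥ v) x = 0 := by
    rw [← mulVec_diagonal (fun i => (d i : ℂ)), mulVec_mulVec, ← hσ.conjTranspose_mul_eq,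
      ← mulVec_mulVec, hv, mulVec_zero, Pi.zero_apply]
  have hexpand : ρ *ᵥ v = (ρ * U) *ᵥ (Uᴴ *ᵥ v) := by
    rw [mulVec_mulVec, Matrix.mul_assoc,
      mul_conjTranspose_self_of_mem_unitaryGroup hσ.mem_unitaryGroup, Matrix.mul_one]
  rw [hexpand]
  ext a
  refine Finset.sum_eq_zero fun x _ => ?_
  rcases mul_eq_zero.mp (hcoord x) with hd | hw
  · have hcol := mulVec_col_eq_zero_of_bornProb_eq_zero hρ (h x (Complex.ofReal_eq_zero.mp hd))
    exact mul_eq_zero_of_left (congrFun hcol a) _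
  · exact mul_eq_zero_of_right _ hw

theorem relEntE_of_supportLE (h : SupportLE ρ σ) :
    relEntE ρ σ = ((ρ * mlog ρ).trace.re - (ρ * mlog σ).trace.re : ℝ) := by
  rw [← Complex.sub_re, ← trace_sub, ← Matrix.mul_sub]
  exact if_pos h

theorem relEntE_of_not_supportLE (h : ¬ SupportLE ρ σ) : relEntE ρ σ = ⊤ :=
  if_neg h

theorem relEntE_submatrix_equiv (hρ : ρ.IsHermitian) (hσ : σ.IsHermitian) (e : l ≃ m) :
    relEntE (ρ.submatrix e e) (σ.submatrix e e) = relEntE ρ σ := by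
  by_cases h : SupportLE ρ σ
  · rw [relEntE_of_supportLE h, relEntE_of_supportLE ((supportLE_submatrix_equiv e).mpr h),
      mlog_submatrix_equiv hρ, mlog_submatrix_equiv hσ]
    simp only [submatrix_mul_equiv, trace_submatrix_equiv]
  · rw [relEntE_of_not_supportLE h,
      relEntE_of_not_supportLE ((supportLE_submatrix_equiv e).not.mpr h)]

end Support

section Klein

theorem mul_log_le_mul_log_add_sub {q r : ℝ} (hq : 0 ≤ q) (hr : 0 ≤ r) (h : r = 0 → q = 0) :
    q * Real.log r ≤ q * Real.log q + (r - q) := by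
  rcases hq.eq_or_lt with rfl | hq
  · simpa using hr
  have hr : 0 < r := hr.lt_of_ne' fun h0 => hq.ne' (h h0)
  have hlog : Real.log r - Real.log q ≤ r / q - 1 := by
    rw [← Real.log_div hr.ne' hq.ne']
    exact Real.log_le_sub_one_of_pos (div_pos hr hq)
  calc q * Real.log r = q * Real.log q + q * (Real.log r - Real.log q) := by ring
    _ ≤ q * Real.log q + q * (r / q - 1) := by gcongr
    _ = q * Real.log q + (r - q) := by field_simp

variable {m : Type*} [Fintype m] [DecidableEq m]

theorem sum_comp_mulVec_le_of_mem_doublyStochastic {D : Matrix m m ℝ}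
    (hD : D ∈ doublyStochastic ℝ m) {s : Set ℝ} {f : ℝ → ℝ} (hf : ConvexOn ℝ s f) {v : m → ℝ}
    (hv : ∀ i, v i ∈ s) :
    ∑ x, f ((D *ᵥ v) x) ≤ ∑ i, f (v i) := by
  calc ∑ x, f ((D *ᵥ v) x)
      ≤ ∑ x, ∑ i, D x i * f (v i) := Finset.sum_le_sum fun x _ =>
        hf.map_sum_le (fun i _ => nonneg_of_mem_doublyStochastic hD)
          (sum_row_of_mem_doublyStochastic hD x) fun i _ => hv i
    _ = ∑ i, f (v i) := by
        rw [Finset.sum_comm]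
        simp only [← Finset.sum_mul, sum_col_of_mem_doublyStochastic hD, one_mul]

theorem map_normSq_mem_doublyStochastic {W : Matrix m m ℂ} (hW : W ∈ unitaryGroup m ℂ) :
    W.map Complex.normSq ∈ doublyStochastic ℝ m := by
  refine mem_doublyStochastic_iff_sum.mpr ⟨fun x i => Complex.normSq_nonneg _, fun x => ?_,
    fun i => ?_⟩
  · have hrow := congrFun₂ (mul_conjTranspose_self_of_mem_unitaryGroup hW) x x
    simp only [Matrix.mul_apply, conjTranspose_apply, one_apply_eq, RCLike.star_def,
      Complex.mul_conj] at hrow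
    exact_mod_cast hrow
  · have hcol := congrFun₂ (conjTranspose_mul_self_of_mem_unitaryGroup hW) i i
    simp only [Matrix.mul_apply, conjTranspose_apply, one_apply_eq, RCLike.star_def, mul_comm,
      Complex.mul_conj] at hcol
    exact_mod_cast hcol

variable {U ρ σ : Matrix m m ℂ}

theorem sum_bornProb_mul_log_le (hρ : ρ.PosSemidef) (hU : U ∈ unitaryGroup m ℂ) :
    ∑ x, bornProb U ρ x * Real.log (bornProb U ρ x) ≤ (ρ * mlog ρ).trace.re := by
  obtain ⟨E, d, h⟩ := exists_isSpectralDecomp hρ.isHermitian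
  have hW : Uᴴ * E ∈ unitaryGroup m ℂ := mul_mem (Unitary.star_mem hU) h.mem_unitaryGroup
  rw [h.re_trace_mul_mlog_self, h.bornProb_eq_mulVec]
  exact sum_comp_mulVec_le_of_mem_doublyStochastic (map_normSq_mem_doublyStochastic hW)
    Real.convexOn_mul_log (h.nonneg hρ)

theorem klein_inequality (hρ : ρ.PosSemidef) (hσ : σ.PosSemidef) (h : SupportLE ρ σ) :
    ρ.trace.re - σ.trace.re ≤ (ρ * mlog ρ).trace.re - (ρ * mlog σ).trace.re := by
  obtain ⟨U, r, hr⟩ := exists_isSpectralDecomp hσ.isHermitian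
  have hU := hr.mem_unitaryGroup
  have hgibbs : ∑ x, bornProb U ρ x * Real.log (r x) ≤
      ∑ x, (bornProb U ρ x * Real.log (bornProb U ρ x) + (bornProb U σ x - bornProb U ρ x)) := by
    refine Finset.sum_le_sum fun x _ => ?_
    rw [hr.bornProb_eq]
    exact mul_log_le_mul_log_add_sub (bornProb_nonneg hρ U x) (hr.nonneg hσ x)
      (h.bornProb_eq_zero hr)
  rw [Finset.sum_add_distrib, Finset.sum_sub_distrib, sum_bornProb hU, sum_bornProb hU,
    ← hr.mlog.re_trace_mul] at hgibbs
  linarith [sum_bornProb_mul_log_le hρ hU]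

end Klein

section PiKronecker

variable {J : Type*} [Fintype J] {ι κ μ : J → Type*} {R : Type*}

/-- The tensor product `⨂ⱼ Aⱼ` of a finite family of matrices, on the configurations `∀ j, ι j`;
the analogue of `Matrix.kronecker` for dependent products. -/
def piKronecker [CommMonoid R] (A : ∀ j, Matrix (ι j) (κ j) R) :
    Matrix (∀ j, ι j) (∀ j, κ j) R :=
  of fun x y => ∏ j, A j (x j) (y j)

theorem piKronecker_mul [DecidableEq J] [∀ j, Fintype (κ j)] [CommSemiring R]
    (A : ∀ j, Matrix (ι j) (κ j) R) (B : ∀ j, Matrix (κ j) (μ j) R) :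
    piKronecker A * piKronecker B = piKronecker fun j => A j * B j := by
  ext x y
  simp only [piKronecker, Matrix.mul_apply, of_apply, ← Finset.prod_mul_distrib]
  exact (Fintype.prod_sum fun j z => A j (x j) z * B j z (y j)).symm

theorem conjTranspose_piKronecker [CommMonoid R] [StarMul R] (A : ∀ j, Matrix (ι j) (κ j) R) :
    (piKronecker A)ᴴ = piKronecker fun j => (A j)ᴴ := by
  ext x y
  simp [piKronecker, conjTranspose_apply]

theorem piKronecker_diagonal [∀ j, DecidableEq (ι j)] [CommMonoidWithZero R] (d : ∀ j, ι j → R) :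
    piKronecker (fun j => diagonal (d j)) = diagonal fun x => ∏ j, d j (x j) := by
  ext x y
  by_cases h : x = y
  · subst h
    simp [piKronecker]
  · obtain ⟨j, hj⟩ := Function.ne_iff.mp h
    rw [diagonal_apply_ne _ h]
    exact Finset.prod_eq_zero (Finset.mem_univ j) (diagonal_apply_ne _ hj)

theorem piKronecker_one [∀ j, DecidableEq (ι j)] [CommMonoidWithZero R] :
    piKronecker (1 : ∀ j, Matrix (ι j) (ι j) R) = 1 := by
  have h := piKronecker_diagonal (ι := ι) (R := R) fun _ _ => 1
  simp only [Finset.prod_const_one, diagonal_one] at h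
  exact h

theorem trace_piKronecker [DecidableEq J] [∀ j, Fintype (ι j)] [CommSemiring R]
    (A : ∀ j, Matrix (ι j) (ι j) R) : (piKronecker A).trace = ∏ j, (A j).trace :=
  (Fintype.prod_sum fun j y => A j y y).symm

variable [DecidableEq J]

open scoped Kronecker in
theorem piKronecker_submatrix_piSplitAt [CommMonoid R] (A : ∀ j, Matrix (ι j) (ι j) R) (j : J) :
    (piKronecker A).submatrix (Equiv.piSplitAt j ι).symm (Equiv.piSplitAt j ι).symm =
      A j ⊗ₖ piKronecker fun i : {i // i ≠ j} => A i := by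
  ext ⟨x, g⟩ ⟨y, g'⟩
  simp only [submatrix_apply, kroneckerMap_apply, piKronecker, of_apply,
    Fintype.prod_eq_mul_prod_subtype_ne _ j, Equiv.piSplitAt_symm_apply, dite_true]
  exact congrArg _ (Finset.prod_congr rfl fun i _ => by rw [dif_neg i.2, dif_neg i.2])

variable [∀ j, Fintype (ι j)]

/-- The reduced state of `ρ` on the `j`-th tensor factor: the partial trace of `ρ` over all the
other factors. -/
def marginal [AddCommMonoid R] (ρ : Matrix (∀ j, ι j) (∀ j, ι j) R) (j : J) :
    Matrix (ι j) (ι j) R :=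
  ∑ g : ∀ i : {i // i ≠ j}, ι i,
    ρ.submatrix (fun x => (Equiv.piSplitAt j ι).symm (x, g))
      (fun x => (Equiv.piSplitAt j ι).symm (x, g))

theorem trace_marginal [AddCommMonoid R] (ρ : Matrix (∀ j, ι j) (∀ j, ι j) R) (j : J) :
    (marginal ρ j).trace = ρ.trace := by
  rw [marginal, trace_sum, ← trace_submatrix_equiv ρ (Equiv.piSplitAt j ι).symm, Matrix.trace,
    Fintype.sum_prod_type_right]
  rfl

theorem posSemidef_marginal {ρ : Matrix (∀ j, ι j) (∀ j, ι j) ℂ} (hρ : ρ.PosSemidef) (j : J) :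
    (marginal ρ j).PosSemidef :=
  posSemidef_sum _ fun _ _ => hρ.submatrix _

variable [∀ j, DecidableEq (ι j)]

theorem trace_marginal_mul [CommSemiring R] (ρ : Matrix (∀ j, ι j) (∀ j, ι j) R) (j : J)
    (X : Matrix (ι j) (ι j) R) :
    (marginal ρ j * X).trace = (ρ * piKronecker (Pi.mulSingle j X)).trace := by
  let e := (Equiv.piSplitAt j ι).symm
  have hrest : (piKronecker fun i : {i // i ≠ j} =>
      Pi.mulSingle (M := fun i => Matrix (ι i) (ι i) R) j X i) = 1 := by
    rw [← piKronecker_one]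
    exact congrArg piKronecker (funext fun i => Pi.mulSingle_eq_of_ne i.2 _)
  rw [← trace_submatrix_equiv (ρ * _) e, ← submatrix_mul_equiv _ _ _ e,
    piKronecker_submatrix_piSplitAt, Pi.mulSingle_eq_same, hrest]
  rw [marginal, Matrix.sum_mul, trace_sum, Matrix.trace, Fintype.sum_prod_type_right]
  refine Finset.sum_congr rfl fun g _ => Finset.sum_congr rfl fun x _ => ?_
  simp only [diag_apply, Matrix.mul_apply, Fintype.sum_prod_type, kroneckerMap_apply, one_apply,
    mul_ite, mul_one, mul_zero, Finset.sum_ite_eq', Finset.mem_univ, if_true]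
  rfl

theorem piKronecker_mem_unitaryGroup [CommRing R] [StarRing R] {U : ∀ j, Matrix (ι j) (ι j) R}
    (hU : ∀ j, U j ∈ unitaryGroup (ι j) R) : piKronecker U ∈ unitaryGroup (∀ j, ι j) R := by
  rw [mem_unitaryGroup_iff', star_eq_conjTranspose, conjTranspose_piKronecker, piKronecker_mul]
  simp only [conjTranspose_mul_self_of_mem_unitaryGroup (hU _)]
  exact piKronecker_one

theorem isSpectralDecomp_piKronecker {A U : ∀ j, Matrix (ι j) (ι j) ℂ} {d : ∀ j, ι j → ℝ}
    (h : ∀ j, IsSpectralDecomp (A j) (U j) (d j)) :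
    IsSpectralDecomp (piKronecker A) (piKronecker U) fun x => ∏ j, d j (x j) where
  mem_unitaryGroup := piKronecker_mem_unitaryGroup fun j => (h j).mem_unitaryGroup
  eq_conj := by
    simp only [Complex.ofReal_prod]
    rw [← piKronecker_diagonal fun j y => (d j y : ℂ), conjTranspose_piKronecker,
      piKronecker_mul, piKronecker_mul]
    simp only [← (h _).eq_conj]

end PiKronecker

section ProductReference

theorem posSemidef_piKronecker {J : Type*} [Fintype J] {ι : J → Type*} [∀ j, Finite (ι j)]
    {A : ∀ j, Matrix (ι j) (ι j) ℂ} (hA : ∀ j, (A j).PosSemidef) :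
    (piKronecker A).PosSemidef := by
  classical
  have (j : J) : Fintype (ι j) := Fintype.ofFinite (ι j)
  choose U d h using fun j => exists_isSpectralDecomp (hA j).isHermitian
  exact (isSpectralDecomp_piKronecker h).posSemidef fun x =>
    Finset.prod_nonneg fun j _ => (h j).nonneg (hA j) (x j)

variable {J : Type*} [Fintype J] [DecidableEq J] {ι : J → Type*} [∀ j, Fintype (ι j)]
  {ρ : Matrix (∀ j, ι j) (∀ j, ι j) ℂ}
  {τ U : ∀ j, Matrix (ι j) (ι j) ℂ} {d : ∀ j, ι j → ℝ}

variable [∀ j, DecidableEq (ι j)] in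
theorem sum_bornProb_marginal_mul (ρ : Matrix (∀ j, ι j) (∀ j, ι j) ℂ)
    (hU : ∀ j, U j ∈ unitaryGroup (ι j) ℂ) (j : J) (f : ι j → ℝ) :
    ∑ y, bornProb (U j) (marginal ρ j) y * f y =
      ∑ x, bornProb (piKronecker U) ρ x * f (x j) := by
  let X : Matrix (ι j) (ι j) ℂ := U j * diagonal (fun y => (f y : ℂ)) * (U j)ᴴ
  have hX : IsSpectralDecomp X (U j) f := ⟨hU j, rfl⟩
  have hmulSingle (i : J) :
      IsSpectralDecomp (Pi.mulSingle (M := fun i => Matrix (ι i) (ι i) ℂ) j X i) (U i)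
        (Pi.mulSingle (M := fun i => ι i → ℝ) j f i) := by
    rcases eq_or_ne i j with rfl | hij
    · simpa only [Pi.mulSingle_eq_same] using hX
    · simpa only [Pi.mulSingle_eq_of_ne hij] using isSpectralDecomp_one (hU i)
  have hprod (x : ∀ i, ι i) : ∏ i, Pi.mulSingle (M := fun i => ι i → ℝ) j f i (x i) = f (x j) := by
    rw [Fintype.prod_eq_single j fun i hij => by simp [Pi.mulSingle_eq_of_ne hij],
      Pi.mulSingle_eq_same]
  rw [← hX.re_trace_mul, trace_marginal_mul,
    (isSpectralDecomp_piKronecker hmulSingle).re_trace_mul]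
  simp only [hprod]

variable [∀ j, DecidableEq (ι j)] in
theorem bornProb_marginal (ρ : Matrix (∀ j, ι j) (∀ j, ι j) ℂ)
    (hU : ∀ j, U j ∈ unitaryGroup (ι j) ℂ) (j : J) (y : ι j) :
    bornProb (U j) (marginal ρ j) y = ∑ x with x j = y, bornProb (piKronecker U) ρ x := by
  simpa [Finset.sum_filter] using sum_bornProb_marginal_mul ρ hU j fun z => if z = y then 1 else 0

theorem supportLE_piKronecker_marginal (hρ : ρ.PosSemidef) :
    SupportLE ρ (piKronecker (marginal ρ)) := by
  classical
  choose U p h using fun j => exists_isSpectralDecomp (posSemidef_marginal hρ j).isHermitian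
  refine supportLE_of_bornProb_eq_zero hρ (isSpectralDecomp_piKronecker h) fun x hx => ?_
  obtain ⟨j, -, hj⟩ := Finset.prod_eq_zero_iff.mp hx
  rw [← (h j).bornProb_eq, bornProb_marginal ρ fun j => (h j).mem_unitaryGroup,
    Finset.sum_eq_zero_iff_of_nonneg fun z _ => bornProb_nonneg hρ _ z] at hj
  exact hj x (by simp)

theorem SupportLE.marginal (hρ : ρ.PosSemidef) (hτ : ∀ j, (τ j).IsHermitian)
    (h : SupportLE ρ (piKronecker τ)) (j : J) : SupportLE (marginal ρ j) (τ j) := by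
  classical
  choose U d hd using fun j => exists_isSpectralDecomp (hτ j)
  refine supportLE_of_bornProb_eq_zero (posSemidef_marginal hρ j) (hd j) fun y hy => ?_
  rw [bornProb_marginal ρ fun j => (hd j).mem_unitaryGroup]
  refine Finset.sum_eq_zero fun x hx => h.bornProb_eq_zero (isSpectralDecomp_piKronecker hd) ?_
  exact Finset.prod_eq_zero (Finset.mem_univ j) (by rw [(Finset.mem_filter.mp hx).2, hy])

variable [∀ j, DecidableEq (ι j)]

theorem re_trace_mul_mlog_piKronecker (hτ : ∀ j, (τ j).IsHermitian)
    (h : SupportLE ρ (piKronecker τ)) :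
    (ρ * mlog (piKronecker τ)).trace.re = ∑ j, (marginal ρ j * mlog (τ j)).trace.re := by
  choose U d hd using fun j => exists_isSpectralDecomp (hτ j)
  have hprod := isSpectralDecomp_piKronecker hd
  simp only [hprod.mlog.re_trace_mul, (hd _).mlog.re_trace_mul,
    sum_bornProb_marginal_mul ρ fun j => (hd j).mem_unitaryGroup]
  rw [Finset.sum_comm]
  refine Finset.sum_congr rfl fun x _ => ?_
  rw [← Finset.mul_sum]
  -- On the kernel of the reference, where the logarithm is not additive, the weight vanishes.
  by_cases hx : ∏ j, d j (x j) = 0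
  · rw [h.bornProb_eq_zero hprod hx, zero_mul, zero_mul]
  · rw [Real.log_prod fun j _ hj => hx (Finset.prod_eq_zero (Finset.mem_univ j) hj)]

theorem relEntE_nonneg {m : Type*} [Fintype m] [DecidableEq m] {ρ σ : Matrix m m ℂ}
    (hρ : ρ.PosSemidef) (hσ : σ.PosSemidef) (h : σ.trace.re ≤ ρ.trace.re) : 0 ≤ relEntE ρ σ := by
  by_cases hsupp : SupportLE ρ σ
  · rw [relEntE_of_supportLE hsupp, EReal.coe_nonneg]
    linarith [klein_inequality hρ hσ hsupp]
  · rw [relEntE_of_not_supportLE hsupp]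
    exact le_top

theorem relEntE_piKronecker_eq_add_sum (hρ : ρ.PosSemidef) (hτ : ∀ j, (τ j).IsHermitian)
    (h : SupportLE ρ (piKronecker τ)) :
    relEntE ρ (piKronecker τ) =
      relEntE ρ (piKronecker (marginal ρ)) + ∑ j, relEntE (marginal ρ j) (τ j) := by
  have hmarg := supportLE_piKronecker_marginal hρ
  have hsum : ∑ j, relEntE (marginal ρ j) (τ j) =
      ((∑ j, ((marginal ρ j * mlog (marginal ρ j)).trace.re -
        (marginal ρ j * mlog (τ j)).trace.re) : ℝ) : EReal) := by
    simp only [relEntE_of_supportLE (h.marginal hρ hτ _)]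
    let coeHom : ℝ →+ EReal := ⟨⟨Real.toEReal, EReal.coe_zero⟩, EReal.coe_add⟩
    exact (map_sum coeHom _ _).symm
  rw [hsum, relEntE_of_supportLE h, relEntE_of_supportLE hmarg,
    re_trace_mul_mlog_piKronecker hτ h, re_trace_mul_mlog_piKronecker
      (fun j => (posSemidef_marginal hρ j).isHermitian) hmarg, Finset.sum_sub_distrib,
    ← EReal.coe_add, sub_add_sub_cancel]

end ProductReference

theorem relEnt_superadditive_general {J : Type*} [Fintype J] [DecidableEq J] {ι : J → Type*}
    [∀ j, Fintype (ι j)] [∀ j, DecidableEq (ι j)] (ρ : Matrix (∀ j, ι j) (∀ j, ι j) ℂ)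
    (hρ : ρ.PosSemidef) (hρtr : ρ.trace = 1) (τ : ∀ j, Matrix (ι j) (ι j) ℂ)
    (hτ : ∀ j, (τ j).PosSemidef) :
    ∑ j, relEntE (marginal ρ j) (τ j) ≤ relEntE ρ (piKronecker τ) := by
  by_cases h : SupportLE ρ (piKronecker τ)
  · have htr : (piKronecker (marginal ρ)).trace = ρ.trace := by
      simp [trace_piKronecker, trace_marginal, hρtr]
    rw [relEntE_piKronecker_eq_add_sum hρ (fun j => (hτ j).isHermitian) h]
    exact le_add_of_nonneg_left (relEntE_nonneg hρ
      (posSemidef_piKronecker (posSemidef_marginal hρ)) (by rw [htr]))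
  · rw [relEntE_of_not_supportLE h]
    exact le_top

section EqualBlocks

variable {n nb k : ℕ}

theorem tensorPowOn_eq_piKronecker (ι : Type*) [Fintype ι] (σ : Matrix (Fin n) (Fin n) ℂ) :
    tensorPowOn ι σ = piKronecker fun _ => σ :=
  rfl

theorem piKronecker_tensorPowOn_submatrix_curry (σ : Matrix (Fin n) (Fin n) ℂ) :
    (piKronecker fun _ : Fin nb => tensorPowOn (Fin k) σ).submatrix
        (Equiv.curry (Fin nb) (Fin k) (Fin n)) (Equiv.curry (Fin nb) (Fin k) (Fin n)) =
      tensorPowOn (Fin nb × Fin k) σ := by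
  ext x y
  exact (Fintype.prod_prod_type fun p => σ (x p) (y p)).symm

theorem blockMarginal_eq_marginal
    (ρ : Matrix (Fin nb × Fin k → Fin n) (Fin nb × Fin k → Fin n) ℂ) (j : Fin nb) :
    blockMarginal ρ j =
      marginal (ρ.submatrix (Equiv.curry (Fin nb) (Fin k) (Fin n)).symm
        (Equiv.curry (Fin nb) (Fin k) (Fin n)).symm) j := by
  let e : ({p : Fin nb × Fin k // p.1 ≠ j} → Fin n) ≃ ({i // i ≠ j} → Fin k → Fin n) :=
    ((Equiv.prodSubtypeFstEquivSubtypeProd (p := (· ≠ j))).arrowCongr (Equiv.refl _)).trans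
      (Equiv.curry _ _ _)
  have hext (x : Fin k → Fin n) (g : {p : Fin nb × Fin k // p.1 ≠ j} → Fin n) :
      blockExt j x g = (Equiv.curry (Fin nb) (Fin k) (Fin n)).symm
        ((Equiv.piSplitAt j fun _ => Fin k → Fin n).symm (x, e g)) := by
    funext ⟨i, t⟩
    by_cases h : i = j
    · subst h
      simp [blockExt]
    · simp only [blockExt, Equiv.curry_symm_apply, Function.uncurry, Equiv.piSplitAt_symm_apply,
        dif_neg h]
      rfl
  ext x y
  simp only [blockMarginal, marginal, of_apply, Matrix.sum_apply, submatrix_apply, hext]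
  exact e.sum_comp fun g => ρ
    ((Equiv.curry _ _ _).symm ((Equiv.piSplitAt j fun _ => Fin k → Fin n).symm (x, g)))
    ((Equiv.curry _ _ _).symm ((Equiv.piSplitAt j fun _ => Fin k → Fin n).symm (y, g)))

end EqualBlocks

/-- Superadditivity of the quantum relative entropy with tensorized reference state:
`D(ρ^N ‖ σ^{⊗N}) ≥ ∑_j D(ρ^{N:(k),B_j} ‖ σ^{⊗k})` for a partition of the `N = nb·k`
sites into `nb` blocks of size `k`. -/
theorem relEnt_superadditive {n nb k : ℕ}
    (ρN : Matrix (Fin nb × Fin k → Fin n) (Fin nb × Fin k → Fin n) ℂ)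
    (hρ : ρN.PosSemidef) (hρtr : ρN.trace = 1)
    (σ : Matrix (Fin n) (Fin n) ℂ) (hσ : σ.PosSemidef) (hσtr : σ.trace = 1) :
    ∑ j : Fin nb, relEntE (blockMarginal ρN j) (tensorPowOn (Fin k) σ) ≤
      relEntE ρN (tensorPowOn (Fin nb × Fin k) σ) := by
  let e := Equiv.curry (Fin nb) (Fin k) (Fin n)
  have hτ : (tensorPowOn (Fin k) σ).PosSemidef := by
    rw [tensorPowOn_eq_piKronecker]
    exact posSemidef_piKronecker fun _ => hσ
  have hτpow : (piKronecker fun _ : Fin nb => tensorPowOn (Fin k) σ).PosSemidef :=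
    posSemidef_piKronecker fun _ => hτ
  have hρe : (ρN.submatrix e.symm e.symm).PosSemidef := hρ.submatrix e.symm
  have hρσ : relEntE ρN (tensorPowOn (Fin nb × Fin k) σ) =
      relEntE (ρN.submatrix e.symm e.symm) (piKronecker fun _ => tensorPowOn (Fin k) σ) := by
    rw [← relEntE_submatrix_equiv hρe.isHermitian hτpow.isHermitian e,
      piKronecker_tensorPowOn_submatrix_curry, submatrix_submatrix, e.symm_comp_self,
      submatrix_id_id]
  simp only [blockMarginal_eq_marginal, hρσ]
  exact relEnt_superadditive_general _ hρe (by rw [trace_submatrix_equiv, hρtr]) _ fun _ => hτ
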